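/- arXiv:1412.3902 — 4 statements merged into one kernel-verified Lean document; each statement's English description precedes it below -/
import Mathlib

section
/- Let $x$ be a real number and $t > 0$. For each $n \in \mathbb{N}$, toss a fair coin $n$ times; let $n_H$ and $n_T$ be the number of heads and tails, and set $S_n^{x,t} = x + ((n_H - n_T)/\sqrt{n})\sqrt{t}$. Then for any extended real numbers $a \le b$, $\lim_{n\to\infty} \mathrm{Prob}(a \le S_n^{x,t} \le b) = \int_a^b \mathcal{G}(t,x,y)\,dy$, where $\mathcal{G}(t,x,y) = \frac{1}{\sqrt{2\pi t}} \exp\left(-\frac{(y-x)^2}{2t}\right)$. Equivalently in counting form: $\lim_{n\to\infty} 2^{-n} \#\{\omega \in \{-1,1\}^n : a \le x + (\sum_{i=1}^n \omega_i)\sqrt{t}/\sqrt{n} \le b\} = \int_a^b \mathcal{G}(t,x,y)\,dy$. -/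
open MeasureTheory Filter
open scoped Classical

/-- The Gaussian (heat) kernel on the line. -/
noncomputable def G (t x y : ℝ) : ℝ :=
  (1 / Real.sqrt (2 * Real.pi * t)) * Real.exp (-(y - x) ^ 2 / (2 * t))

/-- The partial sum `S_k(ω) = x + (∑_{i=1}^k ω_i) √t / √n` of a walk given by
`ω ∈ {-1,1}^n` (encoded as `Fin n → Bool`, `true` = head = +1, `false` = tail = -1). -/
noncomputable def S (x t : ℝ) (n : ℕ) (ω : Fin n → Bool) (k : ℕ) : ℝ :=
  x + (∑ i : Fin n, if (i : ℕ) < k then (if ω i then (1 : ℝ) else -1) else 0)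
      * Real.sqrt t / Real.sqrt n

open ProbabilityTheory in
/-- The law of one fair coin. -/
noncomputable def coinM : Measure Bool := (PMF.uniformOfFintype Bool).toMeasure

instance : IsProbabilityMeasure coinM := by unfold coinM; infer_instance

lemma coinM_singleton (b : Bool) : coinM {b} = 2⁻¹ := by
  unfold coinM
  rw [PMF.toMeasure_apply_singleton _ _ (MeasurableSet.singleton b)]
  simp

noncomputable def coinP : Measure (ℕ → Bool) := Measure.infinitePi (fun _ => coinM)

instance : IsProbabilityMeasure coinP := by unfold coinP; infer_instance

lemma coinP_count (n : ℕ) (p : (Fin n → Bool) → Prop) [DecidablePred p] :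
    (coinP {ω | p (fun i : Fin n => ω i)}).toReal
      = ((Finset.univ.filter p).card : ℝ) / 2 ^ n := by
  have h1 := Measure.map_infinitePi_infinitePi_of_inj (P := fun _ : ℕ => coinM)
    (f := (Fin.val : Fin n → ℕ)) Fin.val_injective
  have h2 : coinP {ω | p (fun i : Fin n => ω i)}
      = Measure.infinitePi (fun _ : Fin n => coinM) {ω | p ω} := by
    rw [← h1, Measure.map_apply (by fun_prop) (Set.toFinite _).measurableSet]
    rfl
  have h3 : {ω : Fin n → Bool | p ω} = ((Finset.univ.filter p : Finset (Fin n → Bool)) : Set _) := by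
    ext; simp
  rw [h2, h3, ← sum_measure_singleton]
  simp only [Measure.infinitePi_singleton_of_fintype, coinM_singleton]
  simp [div_eq_mul_inv]

def coinV (b : Bool) : ℝ := if b then 1 else -1

lemma coin_integral (f : Bool → ℝ) : ∫ ω, f (ω 0) ∂coinP = (f true + f false) / 2 := by
  have h := Measure.infinitePi_map_eval (fun _ : ℕ => coinM) 0
  have : ∫ ω, f (ω 0) ∂coinP = ∫ b, f b ∂coinM := by
    rw [← h, integral_map (measurable_pi_apply 0).aemeasurable (by fun_prop)]
    rfl
  rw [this, integral_fintype (Integrable.of_finite)]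
  simp [Measure.real, coinM_singleton]
  ring

open ProbabilityTheory in
lemma coin_clt : TendstoInDistribution
    (fun (n : ℕ) ω ↦ (√(n:ℝ))⁻¹ * ∑ k ∈ Finset.range n, coinV (ω k)) atTop (id : ℝ → ℝ)
      (fun _ ↦ coinP) (gaussianReal 0 1) := by
  have hm : Measurable coinV := by fun_prop
  refine tendstoInDistribution_inv_sqrt_mul_sum (X := fun (k : ℕ) (ω : ℕ → Bool) => coinV (ω k)) HasLaw.id ?_ ?_ ?_ ?_
  · rw [coin_integral]; simp [coinV]
  · have := coin_integral (fun b => coinV b ^ 2)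
    simp only [Pi.pow_apply] 
    rw [this]; simp [coinV]
  · exact iIndepFun_infinitePi (fun _ => hm)
  · intro i
    refine IdentDistrib.comp (u := coinV) (f := fun ω : ℕ → Bool => ω i) (g := fun ω : ℕ → Bool => ω 0) ?_ hm
    refine ⟨(measurable_pi_apply i).aemeasurable, (measurable_pi_apply 0).aemeasurable, ?_⟩
    unfold coinP
    rw [Measure.infinitePi_map_eval, Measure.infinitePi_map_eval]

lemma S_eq (x t : ℝ) (n : ℕ) (ω : ℕ → Bool) :
    S x t n (fun i => ω i) n =
      x + ((√(n:ℝ))⁻¹ * ∑ k ∈ Finset.range n, coinV (ω k)) * √t := by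
  unfold S
  rw [Finset.sum_range]
  simp only [Fin.is_lt, if_true, coinV]
  ring

open ProbabilityTheory in
theorem stmt0 (x t : ℝ) (ht : 0 < t) (a b : EReal) (hab : a ≤ b) :
    Tendsto
      (fun n : ℕ =>
        ((Finset.univ.filter (fun ω : Fin n → Bool =>
            a ≤ ((S x t n ω n : ℝ) : EReal) ∧ ((S x t n ω n : ℝ) : EReal) ≤ b)).card : ℝ)
          / 2 ^ n)
      atTop
      (nhds (∫ y in {y : ℝ | a ≤ (y : EReal) ∧ (y : EReal) ≤ b}, G t x y)) := by
  set E : Set ℝ := {y : ℝ | a ≤ (y : EReal) ∧ (y : EReal) ≤ b} with hE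
  have hv : (NNReal.mk t ht.le) ≠ 0 := by
    intro h; exact ht.ne' (congrArg NNReal.toReal h)
  have hEm : MeasurableSet E :=
    (measurableSet_le measurable_const measurable_coe_real_ereal).inter
      (measurableSet_le measurable_coe_real_ereal measurable_const)
  have hconv : Convex ℝ E := by
    apply Set.OrdConnected.convex
    refine ⟨fun u hu v hv z hz => ⟨hu.1.trans ?_, le_trans ?_ hv.2⟩⟩
    · exact_mod_cast hz.1
    · exact_mod_cast hz.2
  have hlaw : (gaussianReal 0 1).map (fun z : ℝ => x + z * √t) = gaussianReal x (NNReal.mk t ht.le) := by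
    have h := gaussianReal_map_const_add (μ := 0) (v := (NNReal.mk t ht.le)) x
    have h' := gaussianReal_map_mul_const (μ := 0) (v := 1) (√t)
    have e : (NNReal.mk ((√t)^2) (sq_nonneg _)) * 1 = (NNReal.mk t ht.le) := by
      ext; simp [Real.sq_sqrt ht.le]
    rw [mul_zero, show (NNReal.mk ((√t)^2) (sq_nonneg _)) * 1 = _ from e] at h'
    rw [← h', zero_add, Measure.map_map (by fun_prop) (by fun_prop)] at h
    exact h
  have hc := coin_clt.continuous_comp (g := fun z : ℝ => x + z * √t) (by fun_prop)
  have hlaw' : Measure.map ((fun z : ℝ => x + z * √t) ∘ id) (gaussianReal 0 1)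
        = gaussianReal x (NNReal.mk t ht.le) := hlaw
  have hfr : Measure.map ((fun z : ℝ => x + z * √t) ∘ id) (gaussianReal 0 1) (frontier E) = 0 := by
    rw [hlaw']
    exact gaussianReal_absolutelyContinuous _ hv (hconv.addHaar_frontier volume)
  have key : Tendsto (fun n : ℕ => Measure.map ((fun z : ℝ => x + z * √t) ∘
      fun ω : ℕ → Bool => (√(n:ℝ))⁻¹ * ∑ k ∈ Finset.range n, coinV (ω k)) coinP E) atTop
      (nhds (Measure.map ((fun z : ℝ => x + z * √t) ∘ id) (gaussianReal 0 1) E)) :=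
    ProbabilityMeasure.tendsto_measure_of_null_frontier_of_tendsto' hc.tendsto (E := E) hfr
  rw [hlaw'] at key
  have key2 := (ENNReal.tendsto_toReal (measure_ne_top (gaussianReal x (NNReal.mk t ht.le)) E)).comp key
  have hlim : (gaussianReal x (NNReal.mk t ht.le) E).toReal = ∫ y in E, G t x y := by
    rw [gaussianReal_apply_eq_integral _ hv, ENNReal.toReal_ofReal]
    · simp only [G, gaussianPDFReal, one_div]
      rfl
    · exact integral_nonneg fun y => gaussianPDFReal_nonneg _ _ _
  rw [hlim] at key2
  refine key2.congr fun n => ?_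
  rw [← coinP_count n]
  simp only [Function.comp_apply]
  rw [Measure.map_apply_of_aemeasurable (hc.forall_aemeasurable n) hEm]
  congr 2
  ext ω
  simp only [Set.mem_ofPred_eq, Set.mem_preimage, hE, S_eq]
  rfl
end

section
/- Let $x > 0$, $t > 0$, and let $a, b$ be real numbers with $0 \le a < b$. For $\omega \in \{-1,1\}^n$ and $0 \le k \le n$ set $S_k(\omega) = x + (\sum_{i=1}^k \omega_i)\sqrt{t}/\sqrt{n}$. Then $\lim_{n\to\infty} \frac{\#\{\omega \in \{-1,1\}^n : S_k(\omega) > 0 \text{ for all } 1 \le k \le n,\ a \le S_n(\omega) \le b\}}{\#\{\omega \in \{-1,1\}^n : S_k(\omega) > 0 \text{ for all } 1 \le k \le n\}} = \frac{\int_a^b \mathcal{H}(t,x,y)\,dy}{\int_0^\infty \mathcal{H}(t,x,y)\,dy}$, where $\mathcal{H}(t,x,y) := \mathcal{G}(t,x,y) - \mathcal{G}(t,x,-y)$. -/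
open MeasureTheory Filter
open scoped Classical

/-- The heat kernel for the half-line with absorbing boundary at `0`. -/
noncomputable def H (t x y : ℝ) : ℝ := G t x y - G t x (-y)

namespace Aux

/-- integer step -/
def st (b : Bool) : ℤ := if b then 1 else -1

/-- integer walk -/
def T {n : ℕ} (ω : Fin n → Bool) (k : ℕ) : ℤ :=
  ∑ i : Fin n, if (i : ℕ) < k then st (ω i) else 0

lemma T_zero {n : ℕ} (ω : Fin n → Bool) : T ω 0 = 0 := by simp [T]

lemma T_cons {n : ℕ} (b : Bool) (ω : Fin n → Bool) (k : ℕ) :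
    T (Fin.cons b ω : Fin (n + 1) → Bool) (k + 1) = st b + T ω k := by
  simp [T, Fin.sum_univ_succ]

lemma sum_cons {M : Type*} [AddCommMonoid M] {n : ℕ} (f : (Fin (n + 1) → Bool) → M) :
    ∑ ω, f ω = ∑ ω : Fin n → Bool, f (Fin.cons true ω) + ∑ ω : Fin n → Bool, f (Fin.cons false ω) := by
  rw [← (Fin.consEquiv (fun _ : Fin (n + 1) => Bool)).sum_comp, Fintype.sum_prod_type]
  simp [Fin.consEquiv]

/-- free sum -/
noncomputable def u (g : ℤ → ℝ) (n : ℕ) (m : ℤ) : ℝ := ∑ ω : Fin n → Bool, g (m + T ω n)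

lemma u_succ (g : ℤ → ℝ) (n : ℕ) (m : ℤ) : u g (n + 1) m = u g n (m + 1) + u g n (m - 1) := by
  unfold u
  rw [sum_cons]
  simp [T_cons, st, add_assoc, sub_eq_add_neg]

lemma u_odd (g : ℤ → ℝ) (hg : ∀ z, g (-z) = - g z) (n : ℕ) : ∀ m, u g n (-m) = - u g n m := by
  induction n with
  | zero => intro m; simp [u, T, hg]
  | succ n ih =>
    intro m
    rw [u_succ, u_succ, show -m + 1 = -(m - 1) by ring, show -m - 1 = -(m + 1) by ring, ih, ih]
    ring

noncomputable def F (A : ℤ → Prop) (n : ℕ) (m : ℤ) : ℝ :=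
  ∑ ω : Fin n → Bool, if (∀ k, k ≤ n → 0 < m + T ω k) ∧ A (m + T ω n) then (1 : ℝ) else 0

lemma F_zero (A : ℤ → Prop) (n : ℕ) : F A n 0 = 0 := by
  unfold F
  apply Finset.sum_eq_zero
  intro ω _
  rw [if_neg]
  rintro ⟨h, -⟩
  have := h 0 (by omega)
  simp [T_zero] at this

lemma F_succ (A : ℤ → Prop) (n : ℕ) (m : ℤ) (hm : 0 < m) :
    F A (n + 1) m = F A n (m + 1) + F A n (m - 1) := by
  have key : ∀ (b : Bool) (ω : Fin n → Bool),
      ((∀ k, k ≤ n + 1 → 0 < m + T (Fin.cons b ω : Fin (n + 1) → Bool) k) ↔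
        (∀ k, k ≤ n → 0 < m + st b + T ω k)) := by
    intro b ω
    constructor
    · intro h k hk
      have := h (k + 1) (by omega)
      rw [T_cons] at this
      linarith
    · intro h k hk
      cases k with
      | zero => simpa [T_zero] using hm
      | succ k =>
        rw [T_cons]
        have := h k (by omega)
        linarith
  unfold F
  rw [sum_cons]
  simp only [key, T_cons, ← add_assoc]
  simp [st, sub_eq_add_neg]

noncomputable def g (A : ℤ → Prop) (z : ℤ) : ℝ :=
  (if 0 < z ∧ A z then 1 else 0) - (if 0 < -z ∧ A (-z) then 1 else 0)

lemma reflection (A : ℤ → Prop) (n : ℕ) : ∀ m : ℤ, 0 ≤ m → F A n m = u (g A) n m := by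
  have hg : ∀ z, g A (-z) = - g A z := by intro z; simp [g]
  have h0 : ∀ n, u (g A) n 0 = 0 := by
    intro n
    have := u_odd (g A) hg n 0
    simp at this
    linarith
  induction n with
  | zero =>
    intro m hm
    have : ¬ (m < 0) := by omega
    simp [F, u, g, T, this]
  | succ n ih =>
    intro m hm
    rcases hm.eq_or_lt with rfl | hm
    · rw [F_zero, h0]
    · rw [F_succ _ _ _ hm, u_succ, ih _ (by omega), ih _ (by omega)]

lemma S_eq (x t : ℝ) (n : ℕ) (ω : Fin n → Bool) (k : ℕ) :
    S x t n ω k = x + (T ω k : ℝ) * Real.sqrt t / Real.sqrt n := by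
  unfold S T st
  push_cast
  rfl

/-- the empirical measures -/
noncomputable def mu (n : ℕ) (c s : ℝ) : Measure ℝ :=
  ∑ ω : Fin n → Bool, ((2 : ENNReal) ^ n)⁻¹ • Measure.dirac (c + s * ((T ω n : ℝ) / Real.sqrt n))

instance (n : ℕ) (c s : ℝ) : IsProbabilityMeasure (mu n c s) := by
  constructor
  simp [mu]
  exact ENNReal.mul_inv_cancel (by simp) (by simp)

lemma mu_real (n : ℕ) (c s : ℝ) (I : Set ℝ) (hI : MeasurableSet I) :
    (mu n c s).real I = (∑ ω : Fin n → Bool,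
      if c + s * ((T ω n : ℝ) / Real.sqrt n) ∈ I then (1 : ℝ) else 0) / 2 ^ n := by
  rw [Measure.real, mu, Measure.finsetSum_apply, ENNReal.toReal_sum, Finset.sum_div]
  · refine Finset.sum_congr rfl fun ω _ => ?_
    simp only [Measure.smul_apply, Measure.dirac_apply' _ hI, Set.indicator]
    split_ifs <;> simp
  · intro ω _
    simp only [Measure.smul_apply, Measure.dirac_apply' _ hI, Set.indicator]
    split_ifs <;> simp

lemma sum_exp (θ : ℝ) (n : ℕ) :
    ∑ ω : Fin n → Bool, Complex.exp (θ * (T ω n : ℝ) * Complex.I) = (2 * Complex.cos θ) ^ n := by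
  induction n with
  | zero => simp [T]
  | succ n ih =>
    rw [sum_cons, pow_succ, ← ih, Complex.two_cos, mul_add, Finset.sum_mul, Finset.sum_mul]
    congr 1 <;>
    · refine Finset.sum_congr rfl fun ω _ => ?_
      rw [← Complex.exp_add, T_cons]
      congr 1
      simp [st]
      ring

lemma charFun_mu (n : ℕ) (c s θ : ℝ) : charFun (mu n c s) θ =
    Complex.exp (θ * c * Complex.I) * ((Real.cos (s * θ / Real.sqrt n) ^ n : ℝ) : ℂ) := by
  have := sum_exp (s * θ / Real.sqrt n) n
  rw [charFun_apply_real, mu, integral_finsetSum_measure]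
  · simp only [integral_smul_measure, integral_dirac]
    rw [← Finset.smul_sum]
    have h2 : ∀ ω : Fin n → Bool, Complex.exp (θ * ((c + s * ((T ω n : ℝ) / Real.sqrt n) : ℝ) : ℂ) * Complex.I)
       = Complex.exp (θ * c * Complex.I) *
          Complex.exp ((s * θ / Real.sqrt n : ℝ) * (T ω n : ℝ) * Complex.I) := by
      intro ω
      rw [← Complex.exp_add]
      congr 1
      push_cast
      ring
    simp only [h2]
    rw [← Finset.mul_sum, this, mul_pow]
    simp
    field_simp
  · intro i _
    refine Integrable.smul_measure ?_ (by simp)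
    exact integrable_dirac (by simp)

lemma tendsto_cos_pow (a : ℝ) :
    Tendsto (fun n : ℕ => Real.cos (a / Real.sqrt n) ^ n) atTop (nhds (Real.exp (-a ^ 2 / 2))) := by
  have hs : Tendsto (fun n : ℕ => a / Real.sqrt n) atTop (nhds 0) :=
    tendsto_const_nhds.div_atTop (Real.tendsto_sqrt_atTop.comp tendsto_natCast_atTop_atTop)
  have h : Tendsto (fun n : ℕ => (n : ℝ) * (Real.cos (a / Real.sqrt n) - 1)) atTop
      (nhds (-a ^ 2 / 2)) := by
    rw [← tendsto_sub_nhds_zero_iff]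
    have hb : Tendsto (fun n : ℕ => a ^ 4 * (5 / 96) * (n : ℝ)⁻¹) atTop (nhds 0) := by
      simpa using (tendsto_inv_atTop_nhds_zero_nat (𝕜 := ℝ)).const_mul (a ^ 4 * (5 / 96))
    refine squeeze_zero_norm' ?_ hb
    have h1 : ∀ᶠ n : ℕ in atTop, |a / Real.sqrt n| < 1 := by
      have := hs.abs
      rw [abs_zero] at this
      exact this.eventually (gt_mem_nhds one_pos)
    filter_upwards [h1, eventually_gt_atTop 0] with n hn hn0
    have hc := Real.cos_bound hn.le
    have hn' : (0 : ℝ) < n := by exact_mod_cast hn0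
    have e2 : (a / Real.sqrt n) ^ 2 = a ^ 2 / n := by
      rw [div_pow, Real.sq_sqrt hn'.le]
    have e4 : |a / Real.sqrt n| ^ 4 = a ^ 4 / n ^ 2 := by
      rw [show |a / Real.sqrt n| ^ 4 = (|a / Real.sqrt n| ^ 2) ^ 2 by ring, sq_abs, e2]
      ring
    rw [e4, e2] at hc
    have : (n : ℝ) * (Real.cos (a / Real.sqrt n) - 1) - -a ^ 2 / 2 =
      n * (Real.cos (a / Real.sqrt n) - (1 - a ^ 2 / n / 2)) := by
      field_simp
      ring
    rw [this, Real.norm_eq_abs, abs_mul, abs_of_pos hn']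
    calc _ ≤ n * (a ^ 4 / n ^ 2 * (5 / 96)) := by gcongr
      _ = _ := by field_simp
  have := Real.tendsto_one_add_pow_exp_of_tendsto h
  simpa using this

lemma tendsto_mu (c : ℕ → ℝ) (c0 s : ℝ) (v : NNReal) (hv : (v : ℝ) = s ^ 2) (hv0 : v ≠ 0)
    (hc : Tendsto c atTop (nhds c0)) (I : Set ℝ) (hI : volume (frontier I) = 0) :
    Tendsto (fun n => (mu n (c n) s).real I) atTop
      (nhds ((ProbabilityTheory.gaussianReal c0 v).real I)) := by
  let ν : ℕ → ProbabilityMeasure ℝ := fun n => ⟨mu n (c n) s, inferInstance⟩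
  let γ : ProbabilityMeasure ℝ := ⟨ProbabilityTheory.gaussianReal c0 v, inferInstance⟩
  have key : Tendsto ν atTop (nhds γ) := by
    rw [ProbabilityMeasure.tendsto_iff_tendsto_charFun]
    intro θ
    simp only [ν, γ, ProbabilityMeasure.coe_mk, charFun_mu, ProbabilityTheory.charFun_gaussianReal]
    have h1 : Tendsto (fun n => Complex.exp (θ * (c n) * Complex.I)) atTop
        (nhds (Complex.exp (θ * c0 * Complex.I))) := by
      refine (Complex.continuous_exp.tendsto _).comp ?_
      refine Tendsto.mul_const _ (Tendsto.const_mul _ ?_)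
      exact (Complex.continuous_ofReal.tendsto _).comp hc
    have h2 := (Complex.continuous_ofReal.tendsto _).comp (tendsto_cos_pow (s * θ))
    have := h1.mul h2
    convert this using 2
    · rfl
    rw [Complex.ofReal_exp, ← Complex.exp_add]
    congr 1
    have : ((v : ℝ) : ℂ) = (s : ℂ) ^ 2 := by rw [hv]; push_cast; rfl
    rw [this]
    push_cast
    ring
  have := ProbabilityMeasure.tendsto_measure_of_null_frontier_of_tendsto' key (E := I)
    ((ProbabilityTheory.gaussianReal_absolutelyContinuous c0 hv0) hI)
  exact (ENNReal.tendsto_toReal (by simp)).comp this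

lemma gauss_real (m : ℝ) (v : NNReal) (hv : v ≠ 0) (I : Set ℝ) (hI : MeasurableSet I) :
    (ProbabilityTheory.gaussianReal m v).real I =
      ∫ y in I, ProbabilityTheory.gaussianPDFReal m v y := by
  rw [Measure.real, ProbabilityTheory.gaussianReal_apply_eq_integral _ hv,
    ENNReal.toReal_ofReal]
  exact integral_nonneg fun y => ProbabilityTheory.gaussianPDFReal_nonneg _ _ _

lemma H_eq (t x y : ℝ) (ht : 0 < t) : H t x y =
    ProbabilityTheory.gaussianPDFReal x t.toNNReal y
      - ProbabilityTheory.gaussianPDFReal (-x) t.toNNReal y := by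
  simp only [H, G, ProbabilityTheory.gaussianPDFReal, Real.coe_toNNReal _ ht.le, one_div]
  rw [show (-y - x) ^ 2 = (y - -x) ^ 2 by ring]

lemma main_lim (x t : ℝ) (hx : 0 < x) (ht : 0 < t) (I : Set ℝ) (hI : MeasurableSet I)
    (hI0 : I ⊆ Set.Ioi 0) (hf : volume (frontier I) = 0) :
    Tendsto (fun n : ℕ => ((Finset.univ.filter (fun ω : Fin n → Bool =>
            (∀ k, 1 ≤ k → k ≤ n → 0 < S x t n ω k) ∧ S x t n ω n ∈ I)).card : ℝ) / 2 ^ n)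
      atTop (nhds (∫ y in I, H t x y)) := by
  have hst : 0 < Real.sqrt t := Real.sqrt_pos.2 ht
  have hv0 : t.toNNReal ≠ 0 := by simpa using ht
  set c : ℕ → ℝ := fun n => x - 2 * ((⌈x * Real.sqrt n / Real.sqrt t⌉ : ℝ) * Real.sqrt t / Real.sqrt n)
    with hcdef
  have hsn : Tendsto (fun n : ℕ => Real.sqrt n) atTop atTop :=
    Real.tendsto_sqrt_atTop.comp tendsto_natCast_atTop_atTop
  have hc : Tendsto c atTop (nhds (-x)) := by
    have : Tendsto (fun n : ℕ => (⌈x * Real.sqrt n / Real.sqrt t⌉ : ℝ) * Real.sqrt t / Real.sqrt n)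
        atTop (nhds x) := by
      have hup : Tendsto (fun n : ℕ => x + Real.sqrt t / Real.sqrt n) atTop (nhds x) := by
        simpa using (tendsto_const_nhds (x := x)).add
          ((tendsto_const_nhds (x := Real.sqrt t)).div_atTop hsn)
      refine tendsto_of_tendsto_of_tendsto_of_le_of_le' tendsto_const_nhds hup ?_ ?_
      · filter_upwards [eventually_gt_atTop 0] with n hn
        have hn' : (0 : ℝ) < Real.sqrt n := Real.sqrt_pos.2 (by exact_mod_cast hn)
        rw [le_div_iff₀ hn', ← div_le_iff₀ hst]
        exact Int.le_ceil _
      · filter_upwards [eventually_gt_atTop 0] with n hn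
        have hn' : (0 : ℝ) < Real.sqrt n := Real.sqrt_pos.2 (by exact_mod_cast hn)
        rw [div_le_iff₀ hn', ← le_div_iff₀ hst]
        refine (Int.ceil_lt_add_one _).le.trans (le_of_eq ?_)
        field_simp
    have h2 := (tendsto_const_nhds (x := x)).sub (this.const_mul 2)
    rw [show x - 2 * x = -x by ring] at h2
    exact h2
  have l1 := tendsto_mu (fun _ => x) x (Real.sqrt t) t.toNNReal
    (by rw [Real.coe_toNNReal _ ht.le, Real.sq_sqrt ht.le]) hv0 tendsto_const_nhds I hf
  have l2 := tendsto_mu c (-x) (-Real.sqrt t) t.toNNReal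
    (by rw [Real.coe_toNNReal _ ht.le, neg_sq, Real.sq_sqrt ht.le]) hv0 hc I hf
  have l := l1.sub l2
  rw [gauss_real _ _ hv0 _ hI, gauss_real _ _ hv0 _ hI, ← integral_sub
    (ProbabilityTheory.integrable_gaussianPDFReal _ _).integrableOn
    (ProbabilityTheory.integrable_gaussianPDFReal _ _).integrableOn] at l
  simp only [← H_eq t x _ ht] at l
  refine l.congr' ?_
  filter_upwards [eventually_gt_atTop 0] with n hn
  have hn' : (0 : ℝ) < Real.sqrt n := Real.sqrt_pos.2 (by exact_mod_cast hn)
  rw [mu_real _ _ _ _ hI, mu_real _ _ _ _ hI, ← sub_div, ← Finset.sum_sub_distrib]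
  congr 1
  set m : ℤ := ⌈x * Real.sqrt n / Real.sqrt t⌉ with hm
  have hmpos : 0 < m := Int.ceil_pos.2 (by positivity)
  have hpos : ∀ z : ℤ, 0 < x + (z : ℝ) * Real.sqrt t / Real.sqrt n ↔ 0 < m + z := by
    intro z
    rw [show (0 < m + z ↔ -z < m) by omega, hm, Int.lt_ceil, lt_div_iff₀ hst]
    push_cast
    rw [show x + (z : ℝ) * Real.sqrt t / Real.sqrt n = (x * Real.sqrt n + z * Real.sqrt t) / Real.sqrt n by
      field_simp, div_pos_iff_of_pos_right hn']
    constructor <;> intro h <;> linarith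
  set A : ℤ → Prop := fun z => x + ((z - m : ℤ) : ℝ) * Real.sqrt t / Real.sqrt n ∈ I with hA
  have hApos : ∀ z, (0 < z ∧ A z) ↔ A z := by
    intro z
    refine and_iff_right_of_imp fun h => ?_
    have := (hpos (z - m)).1 (hI0 h)
    omega
  have := reflection A n m hmpos.le
  rw [Finset.card_filter]
  push_cast
  calc _ = u (g A) n m := by
        unfold u g
        refine Finset.sum_congr rfl fun ω _ => ?_
        simp only [hApos]
        have e1 : x + Real.sqrt t * ((T ω n : ℝ) / Real.sqrt n) =
          x + ((m + T ω n - m : ℤ) : ℝ) * Real.sqrt t / Real.sqrt n := by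
          push_cast; ring
        have e2 : c n + -Real.sqrt t * ((T ω n : ℝ) / Real.sqrt n) =
          x + ((-(m + T ω n) - m : ℤ) : ℝ) * Real.sqrt t / Real.sqrt n := by
          simp only [hcdef, ← hm]
          push_cast; ring
        rw [e1, e2]
    _ = F A n m := this.symm
    _ = _ := by
        unfold F
        refine Finset.sum_congr rfl fun ω _ => ?_
        simp only [S_eq, hpos, hA, add_sub_cancel_left]
        congr 1
        simp only [eq_iff_iff]
        refine and_congr_left fun _ => ⟨fun h k _ hk => h k hk, fun h k hk => ?_⟩
        rcases Nat.eq_zero_or_pos k with rfl | hk0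
        · simpa [T_zero] using hmpos
        · exact h k hk0 hk

lemma H_int (t x : ℝ) (ht : 0 < t) : Integrable (H t x) := by
  have : H t x = fun y => ProbabilityTheory.gaussianPDFReal x t.toNNReal y
      - ProbabilityTheory.gaussianPDFReal (-x) t.toNNReal y := by
    funext y; exact H_eq t x y ht
  rw [this]
  exact (ProbabilityTheory.integrable_gaussianPDFReal _ _).sub
    (ProbabilityTheory.integrable_gaussianPDFReal _ _)

lemma H_pos (t x y : ℝ) (ht : 0 < t) (hx : 0 < x) (hy : 0 < y) : 0 < H t x y := by
  unfold H G
  rw [← mul_sub]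
  have hxy := mul_pos hx hy
  refine mul_pos (by positivity) (sub_pos.2 (Real.exp_lt_exp.2 ?_))
  refine div_lt_div_of_pos_right ?_ (by positivity)
  nlinarith

lemma H_int_pos (t x : ℝ) (ht : 0 < t) (hx : 0 < x) : 0 < ∫ y in Set.Ioi (0 : ℝ), H t x y := by
  rw [setIntegral_pos_iff_support_of_nonneg_ae]
  · have : Function.support (H t x) ∩ Set.Ioi 0 = Set.Ioi 0 := by
      rw [Set.inter_eq_right]
      exact fun y hy => (H_pos t x y ht hx hy).ne'
    rw [this]
    simp
  · exact (ae_restrict_iff' measurableSet_Ioi).2 (ae_of_all _ fun y hy => (H_pos t x y ht hx hy).le)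
  · exact (H_int t x ht).integrableOn

end Aux

theorem stmt1 (x t : ℝ) (hx : 0 < x) (ht : 0 < t) (a b : ℝ) (ha : 0 ≤ a) (hab : a < b) :
    Tendsto
      (fun n : ℕ =>
        ((Finset.univ.filter (fun ω : Fin n → Bool =>
            (∀ k, 1 ≤ k → k ≤ n → 0 < S x t n ω k) ∧
              a ≤ S x t n ω n ∧ S x t n ω n ≤ b)).card : ℝ)
        /
        ((Finset.univ.filter (fun ω : Fin n → Bool =>
            ∀ k, 1 ≤ k → k ≤ n → 0 < S x t n ω k)).card : ℝ))
      atTop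
      (nhds ((∫ y in a..b, H t x y) / (∫ y in Set.Ioi (0 : ℝ), H t x y))) := by
  have hfr : volume (frontier (Set.Icc a b ∩ Set.Ioi (0 : ℝ))) = 0 := by
    refine Convex.addHaar_frontier volume ?_
    exact (convex_Icc a b).inter (convex_Ioi 0)
  have h1 := Aux.main_lim x t hx ht (Set.Icc a b ∩ Set.Ioi 0)
    (measurableSet_Icc.inter measurableSet_Ioi) Set.inter_subset_right hfr
  have h2 := Aux.main_lim x t hx ht (Set.Ioi 0) measurableSet_Ioi subset_rfl (by simp)
  have e : ∫ y in Set.Icc a b ∩ Set.Ioi 0, H t x y = ∫ y in a..b, H t x y := by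
    rw [intervalIntegral.integral_of_le hab.le]
    refine setIntegral_congr_set ?_
    have : (Set.Icc a b ∩ Set.Ioi 0 : Set ℝ) =ᵐ[volume] (Set.Ioc a b ∩ Set.Ioi 0 : Set ℝ) :=
      Ioc_ae_eq_Icc.symm.inter (ae_eq_refl _)
    rwa [Set.inter_eq_left.2 (show Set.Ioc a b ⊆ Set.Ioi 0 from
      fun y hy => lt_of_le_of_lt ha hy.1)] at this
  rw [e] at h1
  refine (h1.div h2 (Aux.H_int_pos t x ht hx).ne').congr' ?_
  filter_upwards [eventually_gt_atTop 0] with n hn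
  simp only [Pi.div_apply]
  rw [div_div_div_cancel_right₀ (by positivity)]
  congr 3 <;>
  · ext ω
    simp only [Finset.mem_filter, Finset.mem_univ, true_and, Set.mem_inter_iff, Set.mem_Icc,
      Set.mem_Ioi]
    have := fun h : (∀ k, 1 ≤ k → k ≤ n → 0 < S x t n ω k) => h n hn le_rfl
    tauto
end

section
/- Fix $x \in \mathbb{R}$, $t > 0$, $L > 0$, $n \in \mathbb{N}$, and $\mathcal{U} \subseteq \mathbb{R}$. Then for every $m \in \{1, 2, \dots, n-1\}$, $\mathcal{F}^0_{n,m}(\mathcal{U}) \cap \mathcal{F}^L_{n,m}(\mathcal{U}) = \mathcal{F}^0_{n,m+1}(\mathcal{U}) \cup \mathcal{F}^L_{n,m+1}(\mathcal{U})$. -/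
open scoped Classical

/-- `𝓕⁰ₙ,ₘ(U)`: walks ending in `U` admitting indices `0 ≤ i₁ < ⋯ < iₘ ≤ n` with
`S_{i_j} ≤ 0` for odd `j` and `S_{i_j} ≥ L` for even `j`.  (Here `j : Fin m` is
0-indexed, so "odd `j`" in the paper corresponds to `(j : ℕ) % 2 = 0`.) -/
noncomputable def F0 (x t L : ℝ) (n m : ℕ) (U : Set ℝ) : Finset (Fin n → Bool) :=
  Finset.univ.filter (fun ω => S x t n ω n ∈ U ∧
    ∃ i : Fin m → ℕ, StrictMono i ∧ (∀ j, i j ≤ n) ∧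
      ∀ j : Fin m, if (j : ℕ) % 2 = 0 then S x t n ω (i j) ≤ 0 else L ≤ S x t n ω (i j))

/-- `𝓕ᴸₙ,ₘ(U)`: same with the roles of the two constraints reversed. -/
noncomputable def FL (x t L : ℝ) (n m : ℕ) (U : Set ℝ) : Finset (Fin n → Bool) :=
  Finset.univ.filter (fun ω => S x t n ω n ∈ U ∧
    ∃ i : Fin m → ℕ, StrictMono i ∧ (∀ j, i j ≤ n) ∧
      ∀ j : Fin m, if (j : ℕ) % 2 = 0 then L ≤ S x t n ω (i j) else S x t n ω (i j) ≤ 0)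

theorem alt_mono (P Q : ℕ → Prop) (n m : ℕ)
    (h : ∃ i : Fin (m+1) → ℕ, StrictMono i ∧ (∀ j, i j ≤ n) ∧
      ∀ j : Fin (m+1), if (j : ℕ) % 2 = 0 then P (i j) else Q (i j)) :
    (∃ i : Fin m → ℕ, StrictMono i ∧ (∀ j, i j ≤ n) ∧
      ∀ j : Fin m, if (j : ℕ) % 2 = 0 then P (i j) else Q (i j)) ∧
    (∃ i : Fin m → ℕ, StrictMono i ∧ (∀ j, i j ≤ n) ∧
      ∀ j : Fin m, if (j : ℕ) % 2 = 0 then Q (i j) else P (i j)) := by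
  obtain ⟨i, hi, hn, hP⟩ := h
  refine ⟨⟨fun j => i j.castSucc, fun a b hab => hi (by simpa using hab), fun j => hn _, fun j => ?_⟩,
    ⟨fun j => i j.succ, fun a b hab => hi (by simpa using hab), fun j => hn _, fun j => ?_⟩⟩
  · simpa using hP j.castSucc
  · have := hP j.succ
    rw [Fin.val_succ] at this
    split_ifs at this ⊢ <;> first | assumption | omega

theorem alt_cons (P Q : ℕ → Prop) (n m a : ℕ) (ha : P a) (i : Fin (m+1) → ℕ) (hi : StrictMono i)
    (hn : ∀ j, i j ≤ n)
    (h : ∀ j : Fin (m+1), if (j : ℕ) % 2 = 0 then Q (i j) else P (i j)) (hlt : a < i 0) :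
    ∃ i : Fin (m+1+1) → ℕ, StrictMono i ∧ (∀ j, i j ≤ n) ∧
      ∀ j : Fin (m+1+1), if (j : ℕ) % 2 = 0 then P (i j) else Q (i j) := by
  refine ⟨Fin.cons a i, ?_, ?_, ?_⟩
  · rw [Fin.strictMono_iff_lt_succ]
    intro j
    refine Fin.cases ?_ (fun k => ?_) j
    · simpa using hlt
    · rw [← Fin.succ_castSucc, Fin.cons_succ, Fin.cons_succ]
      exact hi Fin.castSucc_lt_succ
  · intro j
    refine Fin.cases ?_ (fun k => ?_) j
    · simpa using hlt.le.trans (hn 0)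
    · simpa using hn k
  · intro j
    refine Fin.cases ?_ (fun k => ?_) j
    · simpa using ha
    · have := h k
      rw [Fin.val_succ, Fin.cons_succ]
      split_ifs at this ⊢ <;> first | assumption | omega

theorem stmt6 (x t L : ℝ) (ht : 0 < t) (hL : 0 < L) (n : ℕ) (U : Set ℝ) :
    ∀ m : ℕ, 1 ≤ m → m ≤ n - 1 →
      F0 x t L n m U ∩ FL x t L n m U =
        F0 x t L n (m + 1) U ∪ FL x t L n (m + 1) U := by
  intro m hm _
  obtain ⟨m, rfl⟩ : ∃ k, m = k + 1 := ⟨m - 1, by omega⟩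
  ext ω
  simp only [F0, FL, Finset.mem_inter, Finset.mem_union, Finset.mem_filter, Finset.mem_univ,
    true_and]
  constructor
  · rintro ⟨⟨hU, i, hi, hin, hiP⟩, -, k, hk, hkn, hkP⟩
    have hi0 : S x t n ω (i 0) ≤ 0 := by simpa using hiP 0
    have hk0 : L ≤ S x t n ω (k 0) := by simpa using hkP 0
    rcases lt_trichotomy (i 0) (k 0) with h | h | h
    · exact Or.inl ⟨hU, alt_cons (fun a => S x t n ω a ≤ 0) (fun a => L ≤ S x t n ω a)
        n m (i 0) hi0 k hk hkn hkP h⟩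
    · rw [h] at hi0
      linarith
    · exact Or.inr ⟨hU, alt_cons (fun a => L ≤ S x t n ω a) (fun a => S x t n ω a ≤ 0)
        n m (k 0) hk0 i hi hin hiP h⟩
  · rintro (⟨hU, h⟩ | ⟨hU, h⟩)
    · have := alt_mono (fun a => S x t n ω a ≤ 0) (fun a => L ≤ S x t n ω a) n (m+1) h
      exact ⟨⟨hU, this.1⟩, hU, this.2⟩
    · have := alt_mono (fun a => L ≤ S x t n ω a) (fun a => S x t n ω a ≤ 0) n (m+1) h
      exact ⟨⟨hU, this.2⟩, hU, this.1⟩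
end

section
/- Let $L > 0$, $x \in (0,L)$, $t > 0$, and let $a, b$ be real numbers with $0 \le a < b \le L$. For $m \in \mathbb{Z}$ and $n \in \mathbb{N}$ define $\alpha_{m,n} := 2^{-n} |\mathcal{P}_n((2mL+a, 2mL+b))|$ and $\beta_{m,n} := 2^{-n} |\mathcal{P}_n((2mL-b, 2mL-a))|$. Then $\lim_{n\to\infty} \sum_{m=-\infty}^{\infty} (\alpha_{m,n} - \beta_{m,n}) = \sum_{m=-\infty}^{\infty} \lim_{n\to\infty} (\alpha_{m,n} - \beta_{m,n}) = \sum_{m=-\infty}^{\infty} \left( \int_{2mL+a}^{2mL+b} \mathcal{G}(t,x,y)\,dy - \int_{2mL-b}^{2mL-a} \mathcal{G}(t,x,y)\,dy \right)$; in particular, all limits and sums appearing here exist, and the interchange of the limit $n \to \infty$ with the summation over $m$ is valid. -/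
open MeasureTheory Filter
open scoped Classical

/-- `𝒫ₙ(U)`: the set of `n`-step walks whose endpoint `Sₙ(ω)` lies in `U`. -/
noncomputable def P (x t : ℝ) (n : ℕ) (U : Set ℝ) : Finset (Fin n → Bool) :=
  Finset.univ.filter (fun ω => S x t n ω n ∈ U)

/-- `α_{m,n} := 2^{-n} |𝒫ₙ((2mL+a, 2mL+b))|`. -/
noncomputable def alpha (L x t a b : ℝ) (m : ℤ) (n : ℕ) : ℝ :=
  ((P x t n (Set.Ioo (2 * m * L + a) (2 * m * L + b))).card : ℝ) / 2 ^ n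

/-- `β_{m,n} := 2^{-n} |𝒫ₙ((2mL-b, 2mL-a))|`. -/
noncomputable def beta (L x t a b : ℝ) (m : ℤ) (n : ℕ) : ℝ :=
  ((P x t n (Set.Ioo (2 * m * L - b) (2 * m * L - a))).card : ℝ) / 2 ^ n

open ProbabilityTheory

/-- The fair coin. -/
noncomputable def coin : Measure Bool := (PMF.uniformOfFintype Bool).toMeasure

instance : IsProbabilityMeasure coin := by unfold coin; infer_instance

lemma coin_singleton (c : Bool) : coin {c} = 2⁻¹ := by
  unfold coin
  rw [PMF.toMeasure_apply_singleton _ _ (MeasurableSet.singleton c)]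
  simp

lemma coin_real (c : Bool) : coin.real {c} = 2⁻¹ := by
  simp [Measure.real, coin_singleton]

noncomputable def sgn (c : Bool) : ℝ := if c then 1 else -1

noncomputable def walks (n : ℕ) : Measure (Fin n → Bool) := Measure.pi (fun _ => coin)

instance (n : ℕ) : IsProbabilityMeasure (walks n) := by unfold walks; infer_instance

lemma walks_real (n : ℕ) (F : Finset (Fin n → Bool)) :
    (walks n).real (F : Set (Fin n → Bool)) = (F.card : ℝ) / 2 ^ n := by
  have h1 : ∀ ω : Fin n → Bool, (walks n).real {ω} = (2 ^ n : ℝ)⁻¹ := by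
    intro ω
    simp [Measure.real, walks, Measure.pi_singleton, coin_singleton]
  rw [← sum_measureReal_singleton F]
  simp [h1, div_eq_mul_inv]

noncomputable def lawW (n : ℕ) : ProbabilityMeasure ℝ :=
  ⟨(walks n).map (fun ω => (Real.sqrt n)⁻¹ * ∑ i, sgn (ω i)),
    Measure.isProbabilityMeasure_map (Measurable.of_discrete).aemeasurable⟩

noncomputable def gauss (x : ℝ) (v : NNReal) : ProbabilityMeasure ℝ :=
  ⟨gaussianReal x v, inferInstance⟩

lemma lawW_tendsto : Tendsto lawW atTop (nhds (gauss 0 1)) := by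
  refine ProbabilityMeasure.tendsto_iff_tendsto_charFun.2 fun s ↦ ?_
  have h0 : ∫ c, sgn c ∂coin = 0 := by
    rw [integral_fintype (Integrable.of_finite)]
    simp [coin_real, sgn]
  have h1 : ∫ c, (sgn ^ 2) c ∂coin = 1 := by
    rw [integral_fintype (Integrable.of_finite)]
    simp [coin_real, sgn]
  have key := tendsto_charFun_inv_sqrt_mul_pow (P := coin) (X := sgn)
    (Measurable.of_discrete).aemeasurable h0 h1 s
  have e1 : ∀ n, charFun (lawW n : Measure ℝ) s
      = (charFun (coin.map sgn) ((Real.sqrt n)⁻¹ * s)) ^ n := by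
    intro n
    change charFun ((walks n).map (fun ω => (Real.sqrt n)⁻¹ * ∑ i, sgn (ω i))) s = _
    rw [charFun_map_mul_comp (Measurable.of_discrete).aemeasurable]
    have hi : iIndepFun (fun (i : Fin n) (ω : Fin n → Bool) => sgn (ω i)) (walks n) :=
      iIndepFun_pi (fun _ => (Measurable.of_discrete).aemeasurable)
    rw [hi.charFun_map_fun_sum_eq_prod (fun _ => (Measurable.of_discrete).aemeasurable)]
    have h2 : ∀ i : Fin n, (walks n).map (fun ω => sgn (ω i)) = coin.map sgn := by
      intro i
      have := (measurePreserving_eval (fun _ : Fin n => coin) i).map_eq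
      rw [← this, Measure.map_map Measurable.of_discrete Measurable.of_discrete]
      rfl
    simp [h2]
  simp_rw [e1]
  have e2 : charFun (gauss 0 1 : Measure ℝ) s = Complex.exp (- s ^ 2 / 2) := by
    change charFun (gaussianReal 0 1) s = _
    simp [charFun_gaussianReal, neg_div]
  rw [e2]
  exact key

noncomputable def lawS (x t : ℝ) (n : ℕ) : ProbabilityMeasure ℝ :=
  (lawW n).map (f := fun w => x + Real.sqrt t * w) (by fun_prop)

lemma lawS_tendsto (x t : ℝ) (ht : 0 < t) :
    Tendsto (lawS x t) atTop (nhds (gauss x t.toNNReal)) := by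
  have h := ProbabilityMeasure.tendsto_map_of_tendsto_of_continuous _ _ lawW_tendsto
    (f := fun w => x + Real.sqrt t * w) (by fun_prop)
  suffices e : gauss x t.toNNReal = (gauss 0 1).map (f := fun w => x + Real.sqrt t * w)
      (by fun_prop) by
    rw [e]
    exact h
  apply Subtype.ext
  change gaussianReal x t.toNNReal = (gaussianReal 0 1).map (fun w => x + Real.sqrt t * w)
  have : (fun w => x + Real.sqrt t * w) = (fun w => x + w) ∘ (fun w => Real.sqrt t * w) := rfl
  rw [this, ← Measure.map_map (by fun_prop) (by fun_prop), gaussianReal_map_const_mul,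
    gaussianReal_map_const_add]
  congr 1
  · simp
  · ext; simp [ht.le]

lemma lawS_real (x t : ℝ) (n : ℕ) (U : Set ℝ) (hU : MeasurableSet U) :
    (lawS x t n : Measure ℝ).real U = ((P x t n U).card : ℝ) / 2 ^ n := by
  rw [← walks_real]
  change (((walks n).map (fun ω => (Real.sqrt n)⁻¹ * ∑ i, sgn (ω i))).map
    (fun w => x + Real.sqrt t * w)).real U = _
  rw [Measure.map_map (by fun_prop) Measurable.of_discrete,
    map_measureReal_apply Measurable.of_discrete hU]
  congr 1
  ext ω
  have : S x t n ω n = x + Real.sqrt t * ((Real.sqrt n)⁻¹ * ∑ i, sgn (ω i)) := by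
    simp only [S, sgn, Fin.is_lt, if_true]
    ring
  simp [P, this]

lemma gauss_real (x t : ℝ) (ht : 0 < t) (c d : ℝ) (h : c ≤ d) :
    (gauss x t.toNNReal : Measure ℝ).real (Set.Ioo c d) = ∫ y in c..d, G t x y := by
  change (gaussianReal x t.toNNReal).real (Set.Ioo c d) = _
  have hv : t.toNNReal ≠ 0 := by simpa using ht
  rw [Measure.real, gaussianReal_apply_eq_integral _ hv, ENNReal.toReal_ofReal
    (integral_nonneg (fun _ => gaussianPDFReal_nonneg _ _ _)),
    intervalIntegral.integral_of_le h, integral_Ioc_eq_integral_Ioo]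
  simp [G, gaussianPDFReal, ht.le]

lemma gauss_countable (x t : ℝ) (ht : 0 < t) (s : Set ℝ) (hs : s.Countable) :
    (gauss x t.toNNReal : Measure ℝ) s = 0 := by
  have hv : t.toNNReal ≠ 0 := by simpa using ht
  exact gaussianReal_absolutelyContinuous x hv (hs.measure_zero volume)

lemma tendsto_real (x t : ℝ) (ht : 0 < t) (U : Set ℝ) (hU : (frontier U).Countable) :
    Tendsto (fun n => (lawS x t n : Measure ℝ).real U) atTop
      (nhds ((gauss x t.toNNReal : Measure ℝ).real U)) := by
  have := ProbabilityMeasure.tendsto_measure_of_null_frontier_of_tendsto'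
    (lawS_tendsto x t ht) (gauss_countable x t ht _ hU)
  exact (ENNReal.tendsto_toReal (measure_ne_top _ _)).comp this

lemma hasSum_real (μ : ProbabilityMeasure ℝ) (f : ℤ → Set ℝ)
    (hd : Pairwise (Function.onFun Disjoint f)) (hm : ∀ m, MeasurableSet (f m)) :
    HasSum (fun m => (μ : Measure ℝ).real (f m)) ((μ : Measure ℝ).real (⋃ m, f m)) := by
  have h := measure_iUnion (μ := (μ : Measure ℝ)) hd hm
  have hne : ∑' m, (μ : Measure ℝ) (f m) ≠ ⊤ := h ▸ measure_ne_top _ _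
  simp only [Measure.real]
  rw [h, ENNReal.tsum_toReal_eq (fun m => measure_ne_top _ _)]
  exact (ENNReal.summable_toReal hne).hasSum

/-- The periodic family of intervals. -/
def Iv (L c d : ℝ) (m : ℤ) : Set ℝ := Set.Ioo (2 * m * L + c) (2 * m * L + d)

lemma Iv_disj (L c d : ℝ) (hL : 0 < L) (h : d - c ≤ 2 * L) :
    Pairwise (Function.onFun Disjoint (Iv L c d)) := by
  have key : ∀ m k : ℤ, m < k → Disjoint (Iv L c d m) (Iv L c d k) := by
    intro m k hmk
    rw [Set.disjoint_left]
    rintro y ⟨_, h2⟩ ⟨h3, _⟩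
    have : (m : ℝ) + 1 ≤ k := by exact_mod_cast hmk
    nlinarith
  intro m k hmk
  rcases lt_or_gt_of_ne hmk with h' | h'
  · exact key m k h'
  · exact (key k m h').symm

lemma Iv_frontier (L c d : ℝ) (hL : 0 < L) : (frontier (⋃ m, Iv L c d m)).Countable := by
  have hlf : LocallyFinite (fun m : ℤ => Set.Icc (2 * m * L + c) (2 * m * L + d)) := by
    intro y
    refine ⟨Set.Ioo (y - 1) (y + 1), Ioo_mem_nhds (by linarith) (by linarith), ?_⟩
    refine (Set.finite_Icc ⌊(y - 1 - d) / (2 * L)⌋ ⌈(y + 1 - c) / (2 * L)⌉).subset ?_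
    rintro m ⟨z, ⟨h1, h2⟩, h3, h4⟩
    constructor
    · have : (⌊(y - 1 - d) / (2 * L)⌋ : ℝ) ≤ m := by
        refine (Int.floor_le _).trans ?_
        rw [div_le_iff₀ (by linarith)]
        linarith
      exact_mod_cast this
    · have : (m : ℝ) ≤ ⌈(y + 1 - c) / (2 * L)⌉ := by
        refine le_trans ?_ (Int.le_ceil _)
        rw [le_div_iff₀ (by linarith)]
        linarith
      exact_mod_cast this
  have hcl : IsClosed (⋃ m : ℤ, Set.Icc (2 * m * L + c) (2 * m * L + d)) :=
    hlf.isClosed_iUnion (fun m => isClosed_Icc)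
  have hop : IsOpen (⋃ m, Iv L c d m) := isOpen_iUnion (fun m => isOpen_Ioo)
  have hsub : closure (⋃ m, Iv L c d m) ⊆ ⋃ m : ℤ, Set.Icc (2 * m * L + c) (2 * m * L + d) :=
    closure_minimal (Set.iUnion_mono (fun m => Set.Ioo_subset_Icc_self)) hcl
  have hcount : (Set.range (fun m : ℤ => 2 * m * L + c) ∪
      Set.range (fun m : ℤ => 2 * m * L + d)).Countable :=
    (Set.countable_range _).union (Set.countable_range _)
  refine hcount.mono ?_
  rw [hop.frontier_eq]
  rintro y ⟨hy1, hy2⟩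
  obtain ⟨m, h1, h2⟩ := Set.mem_iUnion.1 (hsub hy1)
  rcases h1.eq_or_lt with h1 | h1
  · exact Or.inl ⟨m, h1⟩
  rcases h2.eq_or_lt with h2 | h2
  · exact Or.inr ⟨m, h2.symm⟩
  have h3 : y ∈ Iv L c d m := ⟨h1, h2⟩
  exact absurd (Set.mem_iUnion.2 ⟨m, h3⟩) hy2

lemma main_aux (L x t c d : ℝ) (hL : 0 < L) (ht : 0 < t) (hcd : c < d) (h : d - c ≤ 2 * L) :
    (∀ m, Tendsto (fun n : ℕ => ((P x t n (Iv L c d m)).card : ℝ) / 2 ^ n) atTop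
      (nhds (∫ y in (2 * m * L + c)..(2 * m * L + d), G t x y))) ∧
    (∀ n : ℕ, Summable (fun m => ((P x t n (Iv L c d m)).card : ℝ) / 2 ^ n)) ∧
    Summable (fun m : ℤ => ∫ y in (2 * m * L + c)..(2 * m * L + d), G t x y) ∧
    Tendsto (fun n : ℕ => ∑' m, ((P x t n (Iv L c d m)).card : ℝ) / 2 ^ n) atTop
      (nhds (∑' m : ℤ, ∫ y in (2 * m * L + c)..(2 * m * L + d), G t x y)) := by
  have hm : ∀ m, MeasurableSet (Iv L c d m) := fun m => measurableSet_Ioo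
  have e1 : ∀ n m, ((P x t n (Iv L c d m)).card : ℝ) / 2 ^ n
      = (lawS x t n : Measure ℝ).real (Iv L c d m) := fun n m => (lawS_real x t n _ (hm m)).symm
  have e2 : ∀ m : ℤ, ∫ y in (2 * m * L + c)..(2 * m * L + d), G t x y
      = (gauss x t.toNNReal : Measure ℝ).real (Iv L c d m) :=
    fun m => (gauss_real x t ht _ _ (by linarith)).symm
  simp_rw [e1, e2]
  have hd := Iv_disj L c d hL h
  refine ⟨fun m => tendsto_real x t ht _ ?_, fun n => (hasSum_real _ _ hd hm).summable,
    (hasSum_real _ _ hd hm).summable, ?_⟩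
  · rw [Iv, frontier_Ioo (by linarith)]
    exact (Set.toFinite _).countable
  · simp_rw [fun μ => (hasSum_real μ _ hd hm).tsum_eq]
    exact tendsto_real x t ht _ (Iv_frontier L c d hL)

theorem stmt9 (L x t : ℝ) (hL : 0 < L) (hx : 0 < x) (hxL : x < L) (ht : 0 < t)
    (a b : ℝ) (ha : 0 ≤ a) (hab : a < b) (hb : b ≤ L) :
    (∀ m : ℤ,
      Tendsto (fun n : ℕ => alpha L x t a b m n - beta L x t a b m n) atTop
        (nhds ((∫ y in (2 * m * L + a)..(2 * m * L + b), G t x y) -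
          ∫ y in (2 * m * L - b)..(2 * m * L - a), G t x y))) ∧
    Summable (fun m : ℤ =>
      (∫ y in (2 * m * L + a)..(2 * m * L + b), G t x y) -
        ∫ y in (2 * m * L - b)..(2 * m * L - a), G t x y) ∧
    Tendsto (fun n : ℕ => ∑' m : ℤ, (alpha L x t a b m n - beta L x t a b m n)) atTop
      (nhds (∑' m : ℤ,
        ((∫ y in (2 * m * L + a)..(2 * m * L + b), G t x y) -
          ∫ y in (2 * m * L - b)..(2 * m * L - a), G t x y))) := by
  obtain ⟨A1, A2, A3, A4⟩ := main_aux L x t a b hL ht hab (by linarith)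
  obtain ⟨B1, B2, B3, B4⟩ := main_aux L x t (-b) (-a) hL ht (by linarith) (by linarith)
  simp only [Iv, ← sub_eq_add_neg] at A1 A2 A3 A4 B1 B2 B3 B4
  refine ⟨fun m => (A1 m).sub (B1 m), A3.sub B3, ?_⟩
  rw [A3.tsum_sub B3]
  refine (A4.sub B4).congr (fun n => ?_)
  exact ((A2 n).tsum_sub (B2 n)).symm
end
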